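/- Let λ ∈ ℝ and define E(μ) := ∫_{ℝ^d} (λ/2)|x|² dμ on P₂^a(ℝ^d). Fix τ > 0 with λτ > −1 and let μ, ν ∈ P₂^a(ℝ^d) with proximal points μ_τ, ν_τ. Then equality holds in the contraction inequality for the proximal map: both Λ_τ(μ_τ,ν_τ) − Λ_τ(μ,ν) and −(1/2)(τ|∇_W E|(ν) − W₂(ν,ν_τ))² − (1/2)(τ|∇_W E|(μ) − W₂(μ,μ_τ))² − (λτ/2)[2W₂²(μ_τ,ν_τ) + W₂²(μ,ν_τ) + W₂²(ν,μ_τ) + W₂²(ν,ν_τ) + W₂²(μ,μ_τ)] are equal to −((2λτ + λ²τ²)/(1+λτ)²) [ W₂²(μ,ν) + λτ²(E(μ) + E(ν)) ]. -/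

import Mathlib

open MeasureTheory Filter ENNReal

noncomputable section

/-- Euclidean space `ℝ^d`. -/
abbrev Euc (d : ℕ) := EuclideanSpace ℝ (Fin d)

/-- The squared 2-Wasserstein distance, as an extended nonnegative real:
the infimum over couplings `γ` (Borel probability measures on `ℝ^d × ℝ^d`
with first marginal `μ` and second marginal `ν`) of `∫ |x-y|² dγ`. -/
noncomputable def W2sq {d : ℕ} (μ ν : Measure (Euc d)) : ℝ≥0∞ :=
  ⨅ (γ : Measure (Euc d × Euc d)) (_ : γ.map Prod.fst = μ ∧ γ.map Prod.snd = ν),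
    ∫⁻ q, ENNReal.ofReal (‖q.1 - q.2‖ ^ 2) ∂γ

/-- The 2-Wasserstein distance (a real number; degenerate when `W2sq = ∞`). -/
noncomputable def W2 {d : ℕ} (μ ν : Measure (Euc d)) : ℝ :=
  Real.sqrt (W2sq μ ν).toReal

/-- `γ` is an optimal transport plan from `μ` to `ν`. -/
def IsOptimalPlan {d : ℕ} (μ ν : Measure (Euc d)) (γ : Measure (Euc d × Euc d)) : Prop :=
  γ.map Prod.fst = μ ∧ γ.map Prod.snd = ν ∧
    ∫⁻ q, ENNReal.ofReal (‖q.1 - q.2‖ ^ 2) ∂γ = W2sq μ ν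

/-- `P₂ᵃ(ℝ^d)`: Borel probability measures with finite second moment, absolutely
continuous with respect to Lebesgue measure. -/
def P2a (d : ℕ) : Set (Measure (Euc d)) :=
  {μ | IsProbabilityMeasure μ ∧ μ ≪ volume ∧ ∫⁻ x, ENNReal.ofReal (‖x‖ ^ 2) ∂μ ≠ ⊤}

/-- The potential energy `E(μ) = ∫ (λ/2)|x|² dμ`. -/
noncomputable def Epot {d : ℕ} (lam : ℝ) (μ : Measure (Euc d)) : ℝ :=
  ∫ x, lam / 2 * ‖x‖ ^ 2 ∂μ

/-- The second moment `∫ |x|² dμ`. -/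
noncomputable def sndMom {d : ℕ} (μ : Measure (Euc d)) : ℝ := ∫ x, ‖x‖ ^ 2 ∂μ

/-- `ν` is a proximal point of `μ` for the (real-valued) functional `F`, with step `τ`,
relative to the class `S`: it minimizes `ρ ↦ W₂²(μ,ρ)/(2τ) + F(ρ)` over `S`. -/
def IsProximalPt {d : ℕ} (S : Set (Measure (Euc d))) (F : Measure (Euc d) → ℝ) (τ : ℝ)
    (μ ν : Measure (Euc d)) : Prop :=
  ν ∈ S ∧ ∀ ρ ∈ S, (W2 μ ν) ^ 2 / (2 * τ) + F ν ≤ (W2 μ ρ) ^ 2 / (2 * τ) + F ρ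

/-- `Λ_τ` for the quadratic potential `E(μ) = ∫ (λ/2)|x|² dμ`, for which
`|∇_W E|(μ)² = ∫ |λx|² dμ = λ² ∫|x|² dμ`. -/
noncomputable def LamPot {d : ℕ} (lam τ : ℝ) (μ ν : Measure (Euc d)) : ℝ :=
  (W2 μ ν) ^ 2 + τ ^ 2 / 2 * (lam ^ 2 * sndMom μ) + τ ^ 2 / 2 * (lam ^ 2 * sndMom ν)

/-!
For a coupling `γ` of `μ` and `ν`, expanding the square gives
`|a x - b y|² = a b |x - y|² + (a² - a b) |x|² + (b² - a b) |y|²`,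
and `(x, y) ↦ (a x, b y)` is a bijection between couplings of `(μ, ν)` and couplings of the two
dilated measures when `a, b > 0`. Hence (`W2_dil_sq`) the squared distance between dilations is an
affine function of `W₂²(μ, ν)` and of the two second moments. Applied to the functional
`W₂²(μ, ρ) / (2τ) + E(ρ)`, the same identity completes the square: up to a constant it is a positive
multiple of `W₂²(a#μ, ρ)` with `a = (1 + λτ)⁻¹`. Its minimum over `P₂ᵃ` is attained at `a#μ`, and
only there because `W₂` separates measures (`eq_of_W2sq_eq_zero`); this identifies the proximal
points (`prox_eq`). All distances in the theorem are then explicit in terms of `W₂²(μ, ν)` and the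
second moments of `μ` and `ν`, and both equalities are algebraic identities.
-/

/-- The dilation `x ↦ a x` applied to a measure. -/
def dil {d : ℕ} (a : ℝ) (μ : Measure (Euc d)) : Measure (Euc d) := μ.map (fun x => a • x)

/-- Square-integrability of the identity, in the Bochner form. -/
def FinMom {d : ℕ} (μ : Measure (Euc d)) : Prop := Integrable (fun x => ‖x‖ ^ 2) μ

lemma finMom_of_mem {d : ℕ} {μ : Measure (Euc d)} (h : μ ∈ P2a d) : FinMom μ := by
  refine ⟨by fun_prop, ?_⟩
  rw [hasFiniteIntegral_iff_ofReal (Eventually.of_forall fun x => by positivity)]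
  exact lt_top_iff_ne_top.2 h.2.2

lemma sndMom_nonneg {d : ℕ} (μ : Measure (Euc d)) : 0 ≤ sndMom μ :=
  integral_nonneg fun _ => by positivity

lemma Epot_eq {d : ℕ} (lam : ℝ) (μ : Measure (Euc d)) : Epot lam μ = lam / 2 * sndMom μ := by
  simp only [Epot, sndMom, integral_const_mul]

lemma isProb_dil {d : ℕ} (a : ℝ) (μ : Measure (Euc d)) [IsProbabilityMeasure μ] :
    IsProbabilityMeasure (dil a μ) :=
  Measure.isProbabilityMeasure_map (by fun_prop)

lemma dil_one {d : ℕ} (μ : Measure (Euc d)) : dil 1 μ = μ := by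
  simp [dil]

lemma dil_dil {d : ℕ} (a b : ℝ) (μ : Measure (Euc d)) : dil a (dil b μ) = dil (a * b) μ := by
  unfold dil
  rw [Measure.map_map (by fun_prop) (by fun_prop)]
  congr 1
  ext1 x
  simp [smul_smul]

lemma finMom_dil {d : ℕ} (a : ℝ) {μ : Measure (Euc d)} (h : FinMom μ) : FinMom (dil a μ) := by
  unfold FinMom dil
  rw [integrable_map_measure (by fun_prop) (by fun_prop)]
  refine (Integrable.const_mul h (a ^ 2)).congr (Eventually.of_forall fun x => ?_)
  simp [norm_smul, mul_pow]

lemma sndMom_dil {d : ℕ} (a : ℝ) (μ : Measure (Euc d)) : sndMom (dil a μ) = a ^ 2 * sndMom μ := by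
  unfold sndMom dil
  rw [integral_map (by fun_prop) (by fun_prop), ← integral_const_mul]
  congr 1
  ext x
  simp [norm_smul, mul_pow]

lemma mem_of_finMom {d : ℕ} {μ : Measure (Euc d)} (hp : IsProbabilityMeasure μ)
    (hac : μ ≪ volume) (h : FinMom μ) : μ ∈ P2a d := by
  refine ⟨hp, hac, ?_⟩
  have := h.2
  rw [hasFiniteIntegral_iff_ofReal (Eventually.of_forall fun x => by positivity)] at this
  exact this.ne

lemma dil_mem {d : ℕ} {a : ℝ} (ha : 0 < a) {μ : Measure (Euc d)} (h : μ ∈ P2a d) :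
    dil a μ ∈ P2a d := by
  have := h.1
  refine mem_of_finMom (isProb_dil a μ) ?_ (finMom_dil a (finMom_of_mem h))
  refine (h.2.1.map (f := fun x => a • x) (by fun_prop)).trans ?_
  rw [Measure.map_addHaar_smul _ ha.ne']
  exact Measure.smul_absolutelyContinuous

/-- `γ` is a coupling of `μ` and `ν`. -/
def Cpl {d : ℕ} (μ ν : Measure (Euc d)) (γ : Measure (Euc d × Euc d)) : Prop :=
  γ.map Prod.fst = μ ∧ γ.map Prod.snd = ν

/-- The quadratic transport cost of a plan, as a real number. -/
def cost {d : ℕ} (γ : Measure (Euc d × Euc d)) : ℝ := ∫ q, ‖q.1 - q.2‖ ^ 2 ∂γ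

lemma Cpl.int_fst {d : ℕ} {μ ν : Measure (Euc d)} {γ} (h : Cpl μ ν γ) (hμ : FinMom μ) :
    Integrable (fun q : Euc d × Euc d => ‖q.1‖ ^ 2) γ := by
  have := hμ
  rw [FinMom, ← h.1, integrable_map_measure (by fun_prop) (by fun_prop)] at this
  exact this

lemma Cpl.int_snd {d : ℕ} {μ ν : Measure (Euc d)} {γ} (h : Cpl μ ν γ) (hν : FinMom ν) :
    Integrable (fun q : Euc d × Euc d => ‖q.2‖ ^ 2) γ := by
  have := hν
  rw [FinMom, ← h.2, integrable_map_measure (by fun_prop) (by fun_prop)] at this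
  exact this

lemma Cpl.integral_fst {d : ℕ} {μ ν : Measure (Euc d)} {γ} (h : Cpl μ ν γ) :
    ∫ q : Euc d × Euc d, ‖q.1‖ ^ 2 ∂γ = sndMom μ := by
  rw [sndMom, ← h.1, integral_map (by fun_prop) (by fun_prop)]

lemma Cpl.integral_snd {d : ℕ} {μ ν : Measure (Euc d)} {γ} (h : Cpl μ ν γ) :
    ∫ q : Euc d × Euc d, ‖q.2‖ ^ 2 ∂γ = sndMom ν := by
  rw [sndMom, ← h.2, integral_map (by fun_prop) (by fun_prop)]

lemma Cpl.int_sub {d : ℕ} {μ ν : Measure (Euc d)} {γ} (h : Cpl μ ν γ) (hμ : FinMom μ)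
    (hν : FinMom ν) : Integrable (fun q : Euc d × Euc d => ‖q.1 - q.2‖ ^ 2) γ := by
  refine Integrable.mono' (((h.int_fst hμ).const_mul 2).add ((h.int_snd hν).const_mul 2))
    (by fun_prop) (Eventually.of_forall fun q => ?_)
  have h1 := parallelogram_law_with_norm ℝ q.1 q.2
  simp only [Real.norm_eq_abs, abs_pow, abs_norm, Pi.add_apply]
  nlinarith [mul_self_nonneg ‖q.1 + q.2‖]

lemma Cpl.lintegral_eq {d : ℕ} {μ ν : Measure (Euc d)} {γ} (h : Cpl μ ν γ) (hμ : FinMom μ)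
    (hν : FinMom ν) : ∫⁻ q, ENNReal.ofReal (‖q.1 - q.2‖ ^ 2) ∂γ = ENNReal.ofReal (cost γ) :=
  (ofReal_integral_eq_lintegral_ofReal (h.int_sub hμ hν)
    (Eventually.of_forall fun q => by positivity)).symm

lemma Cpl.W2sq_le {d : ℕ} {μ ν : Measure (Euc d)} {γ} (h : Cpl μ ν γ) (hμ : FinMom μ)
    (hν : FinMom ν) : W2sq μ ν ≤ ENNReal.ofReal (cost γ) := by
  rw [← h.lintegral_eq hμ hν]
  exact iInf₂_le γ h

lemma cpl_prod {d : ℕ} (μ ν : Measure (Euc d)) [IsProbabilityMeasure μ] [IsProbabilityMeasure ν] :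
    Cpl μ ν (μ.prod ν) := by
  constructor
  · simp
  · simp

lemma W2sq_ne_top {d : ℕ} {μ ν : Measure (Euc d)} [IsProbabilityMeasure μ]
    [IsProbabilityMeasure ν] (hμ : FinMom μ) (hν : FinMom ν) : W2sq μ ν ≠ ⊤ :=
  ne_top_of_le_ne_top ENNReal.ofReal_ne_top ((cpl_prod μ ν).W2sq_le hμ hν)

lemma W2_sq {d : ℕ} (μ ν : Measure (Euc d)) : W2 μ ν ^ 2 = (W2sq μ ν).toReal :=
  Real.sq_sqrt ENNReal.toReal_nonneg

lemma cost_nonneg {d : ℕ} (γ : Measure (Euc d × Euc d)) : 0 ≤ cost γ :=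
  integral_nonneg fun _ => by positivity

lemma Cpl.W2_sq_le {d : ℕ} {μ ν : Measure (Euc d)} {γ} (h : Cpl μ ν γ) (hμ : FinMom μ)
    (hν : FinMom ν) : W2 μ ν ^ 2 ≤ cost γ := by
  rw [W2_sq]
  exact ENNReal.toReal_le_of_le_ofReal (cost_nonneg γ) (h.W2sq_le hμ hν)

lemma exists_cpl_lt {d : ℕ} {μ ν : Measure (Euc d)} [IsProbabilityMeasure μ]
    [IsProbabilityMeasure ν] (hμ : FinMom μ) (hν : FinMom ν) {r : ℝ} (hr : W2 μ ν ^ 2 < r) :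
    ∃ γ, Cpl μ ν γ ∧ cost γ < r := by
  rw [W2_sq, ← ENNReal.lt_ofReal_iff_toReal_lt (W2sq_ne_top hμ hν), W2sq] at hr
  simp only [iInf_lt_iff] at hr
  obtain ⟨γ, hγ, h⟩ := hr
  have hγ' : Cpl μ ν γ := hγ
  rw [hγ'.lintegral_eq hμ hν] at h
  exact ⟨γ, hγ', (ENNReal.ofReal_lt_ofReal_iff_of_nonneg (cost_nonneg γ)).1 h⟩

lemma norm_smul_sub_sq {d : ℕ} (a b : ℝ) (x y : Euc d) :
    ‖a • x - b • y‖ ^ 2 =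
      a * b * ‖x - y‖ ^ 2 + (a ^ 2 - a * b) * ‖x‖ ^ 2 + (b ^ 2 - a * b) * ‖y‖ ^ 2 := by
  rw [@norm_sub_sq_real, @norm_sub_sq_real, real_inner_smul_left, real_inner_smul_right,
    norm_smul, norm_smul, mul_pow, mul_pow, Real.norm_eq_abs, Real.norm_eq_abs, sq_abs, sq_abs]
  ring

/-- One half of `W2_dil_sq`: push couplings of `(μ, ν)` forward under `(x, y) ↦ (a x, b y)`. -/
lemma W2_dil_sq_le {d : ℕ} {μ ν : Measure (Euc d)} [IsProbabilityMeasure μ]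
    [IsProbabilityMeasure ν] (hμ : FinMom μ) (hν : FinMom ν) {a b : ℝ} (ha : 0 < a) (hb : 0 < b) :
    W2 (dil a μ) (dil b ν) ^ 2 ≤
      a * b * W2 μ ν ^ 2 + (a ^ 2 - a * b) * sndMom μ + (b ^ 2 - a * b) * sndMom ν := by
  have hab : 0 < a * b := mul_pos ha hb
  refine le_of_forall_pos_le_add fun ε hε => ?_
  obtain ⟨γ, hγ, hlt⟩ := exists_cpl_lt hμ hν
    (show W2 μ ν ^ 2 < W2 μ ν ^ 2 + ε / (a * b) from lt_add_of_pos_right _ (by positivity))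
  have hγ' : Cpl (dil a μ) (dil b ν)
      (γ.map (fun q : Euc d × Euc d => (a • q.1, b • q.2))) := by
    constructor
    · rw [Measure.map_map (by fun_prop) (by fun_prop), dil, ← hγ.1,
        Measure.map_map (by fun_prop) (by fun_prop)]
      rfl
    · rw [Measure.map_map (by fun_prop) (by fun_prop), dil, ← hγ.2,
        Measure.map_map (by fun_prop) (by fun_prop)]
      rfl
  have h1 := hγ'.W2_sq_le (finMom_dil a hμ) (finMom_dil b hν)
  have h2 : cost (γ.map (fun q : Euc d × Euc d => (a • q.1, b • q.2))) =
      a * b * cost γ + (a ^ 2 - a * b) * sndMom μ + (b ^ 2 - a * b) * sndMom ν := by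
    rw [cost, integral_map (by fun_prop) (by fun_prop)]
    simp only [norm_smul_sub_sq]
    have i1 := (hγ.int_sub hμ hν).const_mul (a * b)
    have i2 := (hγ.int_fst hμ).const_mul (a ^ 2 - a * b)
    have i3 := (hγ.int_snd hν).const_mul (b ^ 2 - a * b)
    have i12 : Integrable (fun q : Euc d × Euc d =>
        a * b * ‖q.1 - q.2‖ ^ 2 + (a ^ 2 - a * b) * ‖q.1‖ ^ 2) γ := i1.add i2
    rw [integral_add i12 i3, integral_add i1 i2, integral_const_mul, integral_const_mul,
      integral_const_mul, hγ.integral_fst, hγ.integral_snd, cost]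
  have h3 : a * b * cost γ ≤ a * b * W2 μ ν ^ 2 + ε := by
    have := mul_le_mul_of_nonneg_left hlt.le hab.le
    rwa [mul_add, mul_div_cancel₀ _ hab.ne'] at this
  linarith

/-- The squared distance between dilations is affine in `W₂²` and the second moments. -/
lemma W2_dil_sq {d : ℕ} {μ ν : Measure (Euc d)} [IsProbabilityMeasure μ]
    [IsProbabilityMeasure ν] (hμ : FinMom μ) (hν : FinMom ν) {a b : ℝ} (ha : 0 < a) (hb : 0 < b) :
    W2 (dil a μ) (dil b ν) ^ 2 =
      a * b * W2 μ ν ^ 2 + (a ^ 2 - a * b) * sndMom μ + (b ^ 2 - a * b) * sndMom ν := by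
  refine le_antisymm (W2_dil_sq_le hμ hν ha hb) ?_
  have := isProb_dil a μ
  have := isProb_dil b ν
  -- The reverse inequality is the direct one for the inverse dilations.
  have h := W2_dil_sq_le (finMom_dil a hμ) (finMom_dil b hν) (inv_pos.2 ha) (inv_pos.2 hb)
  rw [dil_dil, dil_dil, inv_mul_cancel₀ ha.ne', inv_mul_cancel₀ hb.ne', dil_one, dil_one,
    sndMom_dil, sndMom_dil] at h
  have h' := mul_le_mul_of_nonneg_left h (mul_pos ha hb).le
  have e : a * b * (a⁻¹ * b⁻¹ * W2 (dil a μ) (dil b ν) ^ 2 +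
      (a⁻¹ ^ 2 - a⁻¹ * b⁻¹) * (a ^ 2 * sndMom μ) + (b⁻¹ ^ 2 - a⁻¹ * b⁻¹) * (b ^ 2 * sndMom ν)) =
      W2 (dil a μ) (dil b ν) ^ 2 + (a * b - a ^ 2) * sndMom μ + (a * b - b ^ 2) * sndMom ν := by
    field_simp
  rw [e] at h'
  linarith

lemma W2_self_sq {d : ℕ} {μ : Measure (Euc d)} (hμ : FinMom μ) : W2 μ μ ^ 2 = 0 := by
  have hc : Cpl μ μ (μ.map (fun x => (x, x))) := by
    constructor <;>
    · rw [Measure.map_map (by fun_prop) (by fun_prop)]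
      exact Measure.map_id
  refine le_antisymm ((hc.W2_sq_le hμ hμ).trans_eq ?_) (sq_nonneg _)
  rw [cost, integral_map (by fun_prop) (by fun_prop)]
  simp

lemma W2_comm {d : ℕ} (μ ν : Measure (Euc d)) : W2 μ ν = W2 ν μ := by
  have key : ∀ μ ν : Measure (Euc d), W2sq μ ν ≤ W2sq ν μ := by
    intro μ ν
    refine le_iInf₂ fun γ hγ => ?_
    have hc : Cpl μ ν (γ.map Prod.swap) := by
      constructor
      · rw [Measure.map_map (by fun_prop) (by fun_prop)]
        exact hγ.2
      · rw [Measure.map_map (by fun_prop) (by fun_prop)]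
        exact hγ.1
    refine (iInf₂_le (γ.map Prod.swap) hc).trans_eq ?_
    rw [lintegral_map (by fun_prop) (by fun_prop)]
    simp only [Prod.fst_swap, Prod.snd_swap, norm_sub_rev]
  rw [W2, W2, le_antisymm (key μ ν) (key ν μ)]

/-- If `W₂(μ, ν) = 0`, Chebyshev's inequality for almost optimal couplings bounds the mass of a set
by that of any of its thickenings. -/
lemma measure_le_thickening {d : ℕ} {μ ν : Measure (Euc d)} (h : W2sq μ ν = 0)
    {F : Set (Euc d)} (hF : IsClosed F) {r : ℝ} (hr : 0 < r) :
    μ F ≤ ν (Metric.thickening r F) := by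
  refine ENNReal.le_of_forall_pos_le_add fun ε hε _ => ?_
  have hr2 : ENNReal.ofReal (r ^ 2) ≠ 0 := by simpa using hr.ne'
  have hpos : W2sq μ ν < ENNReal.ofReal (r ^ 2) * ε := by
    rw [h]
    exact ENNReal.mul_pos hr2 (by simpa using hε.ne')
  rw [W2sq] at hpos
  simp only [iInf_lt_iff] at hpos
  obtain ⟨γ, hγ, hlt⟩ := hpos
  have hcheb := mul_meas_ge_le_lintegral (μ := γ)
    (f := fun q : Euc d × Euc d => ENNReal.ofReal (‖q.1 - q.2‖ ^ 2)) (by fun_prop)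
    (ENNReal.ofReal (r ^ 2))
  have hε' : γ {q | ENNReal.ofReal (r ^ 2) ≤ ENNReal.ofReal (‖q.1 - q.2‖ ^ 2)} ≤ ε :=
    (ENNReal.mul_le_mul_iff_right hr2 ENNReal.ofReal_ne_top).1 (hcheb.trans hlt.le)
  rw [← hγ.1, ← hγ.2, Measure.map_apply measurable_fst hF.measurableSet,
    Measure.map_apply measurable_snd Metric.isOpen_thickening.measurableSet]
  refine (measure_mono ?_).trans ((measure_union_le _ _).trans (add_le_add le_rfl hε'))
  intro q hq
  by_cases hd : r ≤ ‖q.1 - q.2‖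
  · right
    exact ENNReal.ofReal_le_ofReal (pow_le_pow_left₀ hr.le hd 2)
  · left
    refine Metric.mem_thickening_iff.2 ⟨q.1, hq, ?_⟩
    rw [dist_comm, dist_eq_norm]
    exact not_le.1 hd

lemma measure_closed_le {d : ℕ} {μ ν : Measure (Euc d)} [IsProbabilityMeasure ν]
    (h : W2sq μ ν = 0) {F : Set (Euc d)} (hF : IsClosed F) : μ F ≤ ν F :=
  ge_of_tendsto
    (tendsto_measure_thickening_of_isClosed ⟨1, one_pos, measure_ne_top _ _⟩ hF)
    (eventually_nhdsWithin_of_forall fun _ hr => measure_le_thickening h hF hr)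

lemma eq_of_W2sq_eq_zero {d : ℕ} {μ ν : Measure (Euc d)} [IsProbabilityMeasure μ]
    [IsProbabilityMeasure ν] (hμ : FinMom μ) (hν : FinMom ν) (h : W2 μ ν ^ 2 = 0) : μ = ν := by
  have z : ∀ {α β : Measure (Euc d)}, W2sq α β ≠ ⊤ → W2 α β ^ 2 = 0 → W2sq α β = 0 := by
    intro α β ht h0
    rw [W2_sq, ENNReal.toReal_eq_zero_iff] at h0
    exact h0.resolve_right ht
  have h1 := z (W2sq_ne_top hμ hν) h
  have h2 := z (W2sq_ne_top hν hμ) (by rwa [W2_comm])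
  refine ext_of_generate_finite _ ?_ isPiSystem_isClosed (fun F hF => ?_) (by simp)
  · rw [← borel_eq_generateFrom_isClosed]
    exact BorelSpace.measurable_eq
  · exact le_antisymm (measure_closed_le h1 hF) (measure_closed_le h2 hF)

/-- The proximal point of `μ` is the dilation of `μ` by `(1 + λτ)⁻¹`. -/
lemma prox_eq {d : ℕ} {lam τ : ℝ} (hτ : 0 < τ) (hs : 0 < 1 + lam * τ) {μ μτ : Measure (Euc d)}
    (hμ : μ ∈ P2a d) (h : IsProximalPt (P2a d) (Epot lam) τ μ μτ) :
    μτ = dil (1 + lam * τ)⁻¹ μ := by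
  have ha : 0 < (1 + lam * τ)⁻¹ := inv_pos.2 hs
  set a := (1 + lam * τ)⁻¹ with hadef
  have has : a * (1 + lam * τ) = 1 := inv_mul_cancel₀ hs.ne'
  have hd := dil_mem ha hμ
  have := hμ.1
  have := hd.1
  have := h.1.1
  have mμ := finMom_of_mem hμ
  -- Completing the square in the proximal functional.
  have key : ∀ ρ ∈ P2a d, W2 μ ρ ^ 2 / (2 * τ) + Epot lam ρ =
      (W2 (dil a μ) ρ ^ 2 - (a ^ 2 - a) * sndMom μ) / (2 * τ * a) := by
    intro ρ hρ
    have := hρ.1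
    have e := W2_dil_sq mμ (finMom_of_mem hρ) ha one_pos
    rw [dil_one] at e
    rw [e, Epot_eq]
    field_simp
    linear_combination sndMom ρ * has
  have hmin := h.2 _ hd
  rw [key _ h.1, key _ hd, W2_self_sq (finMom_dil a mμ),
    div_le_div_iff_of_pos_right (by positivity)] at hmin
  exact (eq_of_W2sq_eq_zero (finMom_of_mem hd) (finMom_of_mem h.1)
    (le_antisymm (by linarith) (sq_nonneg _))).symm

/-- Transporting `μ` to its dilation along rays through the origin is optimal, hence this distance. -/
lemma W2_dil_self {d : ℕ} {μ : Measure (Euc d)} (hμ : μ ∈ P2a d) {a : ℝ} (ha : 0 < a) :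
    W2 μ (dil a μ) = |1 - a| * Real.sqrt (sndMom μ) := by
  have := hμ.1
  have mμ := finMom_of_mem hμ
  have e := W2_dil_sq mμ mμ one_pos ha
  rw [dil_one, W2_self_sq mμ] at e
  have h0 : 0 ≤ W2 μ (dil a μ) := Real.sqrt_nonneg _
  rw [← Real.sqrt_sq h0, e, ← Real.sqrt_sq_eq_abs, ← Real.sqrt_mul (sq_nonneg _)]
  congr 1
  ring

/-- The gradient `λ x` of the potential and the displacement `(1 - a) x` to the proximal point are
related by `1 - a = a τ λ`, so `λ` and `1 - a` have the same sign and the difference of the two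
lengths is explicit. -/
lemma slope_sub_sq {lam τ a M : ℝ} (hτ : 0 < τ) (ha : 0 < a) (hM : 0 ≤ M)
    (has : a * (1 + lam * τ) = 1) :
    (τ * Real.sqrt (lam ^ 2 * M) - |1 - a| * Real.sqrt M) ^ 2 =
      (lam * τ) ^ 2 * (1 - a) ^ 2 * M := by
  have h1 : 1 - a = a * τ * lam := by linear_combination -has
  have h2 : |1 - a| = a * τ * |lam| := by rw [h1, abs_mul, abs_of_pos (mul_pos ha hτ)]
  rw [h2, Real.sqrt_mul (sq_nonneg _), Real.sqrt_sq_eq_abs]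
  have h3 : τ * (|lam| * √M) - a * τ * |lam| * √M = τ * |lam| * (1 - a) * √M := by ring
  rw [h3, mul_pow, mul_pow, mul_pow, sq_abs, Real.sq_sqrt hM]
  ring

/-- **Equality in the contraction inequality for the quadratic potential**
(Proposition 4.2). For `E(μ) = ∫ (λ/2)|x|² dμ`, `τ > 0` with `λτ > -1`, and
`μ, ν ∈ P₂ᵃ` with proximal points `μ_τ, ν_τ`, both sides of inequality (1.18)
are equal to `-((2λτ+λ²τ²)/(1+λτ)²)[W₂²(μ,ν) + λτ²(E(μ)+E(ν))]`. -/
theorem potential_contraction_equality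
    {d : ℕ} (lam τ : ℝ) (hτ : 0 < τ) (hlamτ : lam * τ > -1)
    (μ ν : Measure (Euc d)) (hμ : μ ∈ P2a d) (hν : ν ∈ P2a d)
    (μτ ντ : Measure (Euc d))
    (hμτ : IsProximalPt (P2a d) (Epot lam) τ μ μτ)
    (hντ : IsProximalPt (P2a d) (Epot lam) τ ν ντ) :
    LamPot lam τ μτ ντ - LamPot lam τ μ ν =
      -((2 * lam * τ + lam ^ 2 * τ ^ 2) / (1 + lam * τ) ^ 2) *
        ((W2 μ ν) ^ 2 + lam * τ ^ 2 * (Epot lam μ + Epot lam ν)) ∧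
    -(1/2) * (τ * Real.sqrt (lam ^ 2 * sndMom ν) - W2 ν ντ) ^ 2
      - (1/2) * (τ * Real.sqrt (lam ^ 2 * sndMom μ) - W2 μ μτ) ^ 2
      - (lam * τ / 2) * (2 * (W2 μτ ντ) ^ 2 + (W2 μ ντ) ^ 2 + (W2 ν μτ) ^ 2
          + (W2 ν ντ) ^ 2 + (W2 μ μτ) ^ 2) =
      -((2 * lam * τ + lam ^ 2 * τ ^ 2) / (1 + lam * τ) ^ 2) *
        ((W2 μ ν) ^ 2 + lam * τ ^ 2 * (Epot lam μ + Epot lam ν)) := by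
  have hs : 0 < 1 + lam * τ := by linarith
  have eμ := prox_eq hτ hs hμ hμτ
  have eν := prox_eq hτ hs hν hντ
  have ha : 0 < (1 + lam * τ)⁻¹ := inv_pos.2 hs
  have has : (1 + lam * τ)⁻¹ * (1 + lam * τ) = 1 := inv_mul_cancel₀ hs.ne'
  have := hμ.1
  have := hν.1
  have mμ := finMom_of_mem hμ
  have mν := finMom_of_mem hν
  have d1 := W2_dil_sq mμ mν ha ha
  have d2 := W2_dil_sq mμ mν one_pos ha
  have d3 := W2_dil_sq mν mμ one_pos ha
  rw [dil_one] at d2 d3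
  rw [W2_comm ν μ] at d3
  have hM := sndMom_nonneg μ
  have hN := sndMom_nonneg ν
  rw [eμ, eν]
  constructor
  · rw [LamPot, LamPot, d1, sndMom_dil, sndMom_dil, Epot_eq, Epot_eq]
    field_simp
    ring
  · rw [W2_dil_self hμ ha, W2_dil_self hν ha, slope_sub_sq hτ ha hM has,
      slope_sub_sq hτ ha hN has, d1, d2, d3, mul_pow _ √(sndMom μ), mul_pow _ √(sndMom ν), Real.sq_sqrt hM,
      Real.sq_sqrt hN, sq_abs, Epot_eq, Epot_eq]
    field_simp
    ring
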